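/- Let n ≥ 3 be an integer. For every function t assigning a nonzero real number t(i,j,k) to each triple of integers i,j,k ≥ 1 with i+j+k = n, there exists a transverse triple (F,G,H) of complete flags in ℝ^n such that T_{i,j,k}(F,G,H) = t(i,j,k) for all such triples (i,j,k). -/

import Mathlib

/-- `F` is a complete flag in an `n`-dimensional real vector space:
`F 0 ⊆ F 1 ⊆ ⋯ ⊆ F n` with `dim (F l) = l` for `0 ≤ l ≤ n`. -/
def IsFlag (n : ℕ) {V : Type*} [AddCommGroup V] [Module ℝ V]
    (F : ℕ → Submodule ℝ V) : Prop :=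
  (∀ l, l < n → F l ≤ F (l + 1)) ∧ ∀ l, l ≤ n → Module.finrank ℝ (F l) = l

/-- A triple of flags is transverse if `F a + G b + H c = V` whenever `a + b + c = n`. -/
def TransverseTriple (n : ℕ) {V : Type*} [AddCommGroup V] [Module ℝ V]
    (F G H : ℕ → Submodule ℝ V) : Prop :=
  ∀ a b c : ℕ, a + b + c = n → F a ⊔ G b ⊔ H c = ⊤

/-- A pair of flags is transverse if `F a + G (n - a) = V` for all `0 ≤ a ≤ n`. -/
def TransversePair (n : ℕ) {V : Type*} [AddCommGroup V] [Module ℝ V]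
    (F G : ℕ → Submodule ℝ V) : Prop :=
  ∀ a, a ≤ n → F a ⊔ G (n - a) = ⊤

/-- `A` is the `(i,j,k)`-eruption endomorphism of the triple `(F,G,H)`: it acts as the
scalar `(n - i)/n` on `F i` and as the scalar `-i/n` on `G j + H k`. -/
def IsEruption (n i j k : ℕ) {V : Type*} [AddCommGroup V] [Module ℝ V]
    (F G H : ℕ → Submodule ℝ V) (A : Module.End ℝ V) : Prop :=
  (∀ v ∈ F i, A v = (((n : ℝ) - (i : ℝ)) / (n : ℝ)) • v) ∧
  (∀ v ∈ G j ⊔ H k, A v = (-(i : ℝ) / (n : ℝ)) • v)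

/-- `A` is the `(i, n-i)`-shearing endomorphism of the pair `(F,G)`: it acts as the
scalar `(n - i)/n` on `F i` and as the scalar `-i/n` on `G (n - i)`. -/
def IsShearing (n i : ℕ) {V : Type*} [AddCommGroup V] [Module ℝ V]
    (F G : ℕ → Submodule ℝ V) (A : Module.End ℝ V) : Prop :=
  (∀ v ∈ F i, A v = (((n : ℝ) - (i : ℝ)) / (n : ℝ)) • v) ∧
  (∀ v ∈ G (n - i), A v = (-(i : ℝ) / (n : ℝ)) • v)

/-- `f` (whose values `f 0, …, f (n-1)` matter) is a basis adapted to the flag `F`: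
`F l` is the span of `f 0, …, f (l-1)` for all `0 ≤ l ≤ n`. -/
def Adapted (n : ℕ) {V : Type*} [AddCommGroup V] [Module ℝ V]
    (F : ℕ → Submodule ℝ V) (f : ℕ → V) : Prop :=
  ∀ l, l ≤ n → F l = Submodule.span ℝ (f '' Set.Iio l)

/-- `F^(a) ∧ G^(b) ∧ H^(c) := ω (f 0, …, f (a-1), g 0, …, g (b-1), h 0, …, h (c-1))`,
for `a + b + c = n`. -/
noncomputable def wedge (n : ℕ) {V : Type*} [AddCommGroup V] [Module ℝ V]
    (ω : AlternatingMap ℝ V ℝ (Fin n)) (f g h : ℕ → V) (a b c : ℕ) : ℝ :=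
  ω fun l : Fin n =>
    if (l : ℕ) < a then f (l : ℕ)
    else if (l : ℕ) < a + b then g ((l : ℕ) - a)
    else h ((l : ℕ) - a - b)

/-- The triple ratio `T_{i,j,k}(F,G,H)` computed with adapted bases `f, g, h` of the
flags `F, G, H` and the nonzero alternating `n`-form `ω`. -/
noncomputable def tripleRatio (n : ℕ) {V : Type*} [AddCommGroup V] [Module ℝ V]
    (ω : AlternatingMap ℝ V ℝ (Fin n)) (f g h : ℕ → V) (i j k : ℕ) : ℝ :=
  (wedge n ω f g h (i + 1) j (k - 1) / wedge n ω f g h (i + 1) (j - 1) k) *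
  (wedge n ω f g h (i - 1) (j + 1) k / wedge n ω f g h i (j + 1) (k - 1)) *
  (wedge n ω f g h i (j - 1) (k + 1) / wedge n ω f g h (i - 1) j (k + 1))

/-!
The triple ratios depend only on the numbers `w (a, c) = F^(a) ∧ G^(n - a - c) ∧ H^(c)`, and each
triple ratio involves the six values of `w` around one interior point of a triangular grid. Given
the bottom row `c = 0`, prescribing all triple ratios is therefore a recursion on `c` which
determines `w (·, c + 2)`, up to an overall scalar, from the two preceding rows.

Every nonvanishing `w` is realised by some `H`, for any two fixed transverse flags `F` and `G`. The
vectors `h_c` of an adapted basis of `H` are found one at a time: the `n - c` values in row `c + 1`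
are linear functions of `h_c`, and evaluating them on the basis of `F` gives a triangular matrix
whose diagonal entries are, up to sign, the values of `w` in row `c`.
-/

open Module Submodule

lemma extend_update_of_injective {ι κ α : Type*} [DecidableEq ι] [DecidableEq κ] {σ : κ → ι}
    (hσ : Function.Injective σ) (v : κ → α) (u : ι → α) (k : κ) (x : α) :
    Function.extend σ (Function.update v k x) u =
      Function.update (Function.extend σ v u) (σ k) x := by
  funext i
  by_cases hi : ∃ l, σ l = i
  · obtain ⟨l, rfl⟩ := hi
    by_cases hlk : l = k
    · simp [hlk, hσ.extend_apply]
    · simp [hlk, hσ.ne hlk, hσ.extend_apply]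
  · have hik : i ≠ σ k := fun h => hi ⟨k, h.symm⟩
    simp [Function.extend_apply' _ _ _ hi, hik]

section LinearAlgebra

variable {K V : Type*} [Field K] [AddCommGroup V] [Module K V]

lemma alternatingMap_apply_ne_zero_iff {ι : Type*} [Fintype ι] [FiniteDimensional K V]
    {ω : V [⋀^ι]→ₗ[K] K} (hω : ω ≠ 0) (hι : Fintype.card ι = finrank K V) (v : ι → V) :
    ω v ≠ 0 ↔ span K (Set.range v) = ⊤ := by
  constructor
  · intro hv
    have hli : LinearIndependent K v := not_not.1 (mt (ω.map_linearDependent v) hv)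
    exact hli.span_eq_top_of_card_eq_finrank' hι
  · intro hv
    rwa [← coe_basisOfTopLeSpanOfCardEqFinrank v hv.ge hι, ω.map_basis_ne_zero_iff]

lemma alternatingMap_linearCombination {κ : Type*} [Fintype κ] [DecidableEq κ]
    (η : V [⋀^κ]→ₗ[K] K) (P : κ → κ → K) (v : κ → V) :
    η (fun k => Fintype.linearCombination K v (P k)) = (Matrix.of P).det * η v := by
  have hη := (η.compLinearMap (Fintype.linearCombination K v)).eq_smul_basis_det
    (Pi.basisFun K κ)
  have hbasis : η.compLinearMap (Fintype.linearCombination K v) (Pi.basisFun K κ) = η v :=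
    congrArg η (by ext k; simp)
  calc η (fun k => Fintype.linearCombination K v (P k))
      = (η.compLinearMap (Fintype.linearCombination K v)) P := rfl
    _ = η v * (Matrix.of P).det := by
      rw [hη, AlternatingMap.smul_apply, hbasis, Pi.basisFun_det_apply, smul_eq_mul]
    _ = (Matrix.of P).det * η v := mul_comm _ _

/-- The partial application of an alternating map `ω` which leaves free the slots in the range of
`σ` and puts the vectors `u i` in the remaining ones. -/
noncomputable def alternatingSlice {ι κ : Type*} (ω : V [⋀^ι]→ₗ[K] K) (σ : κ ↪ ι) (u : ι → V) :
    V [⋀^κ]→ₗ[K] K where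
  toFun v := ω (Function.extend σ v u)
  map_update_add' v k x y := by classical simp [extend_update_of_injective σ.injective]
  map_update_smul' v k r x := by classical simp [extend_update_of_injective σ.injective]
  map_eq_zero_of_eq' v k l hv hkl := by
    refine ω.map_eq_zero_of_eq _ (i := σ k) (j := σ l) ?_ (σ.injective.ne hkl)
    simpa [σ.injective.extend_apply] using hv

lemma exists_forall_alternatingMap_eq_mul {ι κ : Type*} [Finite κ] {v v' : κ → V}
    (hv : ∀ k, v' k ∈ span K (Set.range v)) :
    ∃ δ : K, ∀ (ω : V [⋀^ι]→ₗ[K] K) (σ : κ ↪ ι) (u : ι → V),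
      ω (Function.extend σ v' u) = δ * ω (Function.extend σ v u) := by
  classical
  have := Fintype.ofFinite κ
  simp only [← Fintype.range_linearCombination, LinearMap.mem_range] at hv
  choose P hP using hv
  obtain rfl : (fun k => Fintype.linearCombination K v (P k)) = v' := funext hP
  exact ⟨(Matrix.of P).det, fun ω σ u =>
    alternatingMap_linearCombination (alternatingSlice ω σ u) P v⟩

lemma exists_eq_smul_alternatingMap {ι : Type*} [Fintype ι] [FiniteDimensional K V]
    {ω : V [⋀^ι]→ₗ[K] K} (hω : ω ≠ 0) (hι : Fintype.card ι = finrank K V)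
    (ω' : V [⋀^ι]→ₗ[K] K) : ∃ r : K, ω' = r • ω := by
  classical
  let e : Basis ι K V := (finBasis K V).reindex (Fintype.equivFinOfCardEq hι).symm
  have he : ω e ≠ 0 := (ω.map_basis_ne_zero_iff e).2 hω
  refine ⟨ω' e / ω e, ?_⟩
  calc ω' = ω' e • e.det := ω'.eq_smul_basis_det e
    _ = (ω' e / ω e * ω e) • e.det := by rw [div_mul_cancel₀ _ he]
    _ = (ω' e / ω e) • ω := by rw [mul_smul, ← ω.eq_smul_basis_det e]

lemma exists_forall_dual_apply_eq_of_triangular {ι : Type*} [Finite ι] [LinearOrder ι]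
    {φ : ι → Dual K V} {e : ι → V} (hlower : ∀ a l, l < a → φ a (e l) = 0)
    (hdiag : ∀ a, φ a (e a) ≠ 0) (y : ι → K) : ∃ v, ∀ a, φ a v = y a := by
  have := Fintype.ofFinite ι
  let M : Matrix ι ι K := Matrix.of fun a l => φ a (e l)
  have hdet : IsUnit M.det := by
    have htri : M.IsUpperTriangular := fun a l hla => hlower a l hla
    rw [Matrix.det_of_isUpperTriangular htri, isUnit_iff_ne_zero]
    exact Finset.prod_ne_zero_iff.2 fun a _ => hdiag a
  obtain ⟨x, hx⟩ :=
    Matrix.mulVec_surjective_iff_isUnit.2 ((Matrix.isUnit_iff_isUnit_det M).2 hdet) y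
  refine ⟨∑ l, x l • e l, fun a => ?_⟩
  simp [← hx, M, Matrix.mulVec, dotProduct, mul_comm]

end LinearAlgebra

section HexagonPotential

variable {G : Type*} [CommGroup G]

/-- The quotients `w (a + 1, c) / w (a, c)` of a solution `w` of the hexagon equation with bottom
row quotients `r₀`; row `1` is free and chosen to be trivial. -/
def hexagonRowRatio (t : ℕ → ℕ → G) (r₀ : ℕ → G) : ℕ → ℕ → G
  | 0, i => r₀ i
  | 1, _ => 1
  | k + 2, i => t (i + 1) (k + 1) * hexagonRowRatio t r₀ (k + 1) i *
      hexagonRowRatio t r₀ (k + 1) (i + 1) / hexagonRowRatio t r₀ k (i + 1)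

lemma exists_hexagon_eq (t : ℕ → ℕ → G) (w₀ : ℕ → G) :
    ∃ w : ℕ → ℕ → G, (∀ a, w a 0 = w₀ a) ∧ ∀ i k,
      w (i + 2) k * w i (k + 1) * w (i + 1) (k + 2) =
        t (i + 1) (k + 1) * (w (i + 2) (k + 1) * w (i + 1) k * w i (k + 2)) := by
  let r := hexagonRowRatio t fun i => w₀ (i + 1) / w₀ i
  let w : ℕ → ℕ → G := fun a c => w₀ 0 * ∏ l ∈ Finset.range a, r c l
  have hw : ∀ a c, w (a + 1) c = w a c * r c a := fun a c => by
    simp only [w, Finset.prod_range_succ, mul_assoc]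
  have hr : ∀ i k, r k (i + 1) * r (k + 2) i =
      t (i + 1) (k + 1) * r (k + 1) i * r (k + 1) (i + 1) := fun i k => mul_div_cancel _ _
  refine ⟨w, fun a => ?_, fun i k => ?_⟩
  · simp only [w, r, hexagonRowRatio, Finset.prod_range_div, mul_div_cancel]
  · calc w (i + 2) k * w i (k + 1) * w (i + 1) (k + 2)
        = w i k * r k i * w i (k + 1) * w i (k + 2) * (r k (i + 1) * r (k + 2) i) := by
          simp only [hw]; ac_rfl
      _ = t (i + 1) (k + 1) * (w (i + 2) (k + 1) * w (i + 1) k * w i (k + 2)) := by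
          simp only [hr, hw]; ac_rfl

end HexagonPotential

section SpanFlag

variable {V : Type*} [AddCommGroup V] [Module ℝ V] {n : ℕ}

/-- The flag spanned by a sequence of vectors: its `l`-th term is the span of `f 0, …, f (l - 1)`.
It has `f` as an adapted basis. -/
def spanFlag (f : ℕ → V) (l : ℕ) : Submodule ℝ V :=
  span ℝ (f '' Set.Iio l)

lemma spanFlag_zero (f : ℕ → V) : spanFlag f 0 = ⊥ := by
  simp [spanFlag]

lemma spanFlag_succ (f : ℕ → V) (l : ℕ) : spanFlag f (l + 1) = spanFlag f l ⊔ span ℝ {f l} := by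
  have hIio : Set.Iio (l + 1) = Set.Iio l ∪ {l} := by
    ext m
    simp only [Set.mem_Iio, Set.mem_union, Set.mem_singleton_iff]
    omega
  rw [spanFlag, spanFlag, ← span_union, ← Set.image_singleton, ← Set.image_union, hIio]

lemma spanFlag_eq_span_range (f : ℕ → V) (l : ℕ) :
    spanFlag f l = span ℝ (Set.range fun i : Fin l => f i) := by
  refine congrArg (span ℝ) (Set.ext fun v => ?_)
  simp [Fin.exists_iff]

lemma mem_spanFlag (f : ℕ → V) {l m : ℕ} (hlm : l < m) : f l ∈ spanFlag f m :=
  subset_span ⟨l, hlm, rfl⟩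

lemma spanFlag_update_succ (h : ℕ → V) (c : ℕ) (v : V) :
    spanFlag (Function.update h c v) (c + 1) = spanFlag h c ⊔ span ℝ {v} := by
  have hc : spanFlag (Function.update h c v) c = spanFlag h c :=
    congrArg (span ℝ) (Set.image_congr fun l hl => Function.update_of_ne (ne_of_lt hl) _ _)
  rw [spanFlag_succ, hc, Function.update_self]

lemma adapted_spanFlag (f : ℕ → V) : Adapted n (spanFlag f) f :=
  fun _ _ => rfl

lemma isFlag_spanFlag (hV : finrank ℝ V = n) {f : ℕ → V} (hf : spanFlag f n = ⊤) :
    IsFlag n (spanFlag f) := by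
  have hli : LinearIndependent ℝ fun i : Fin n => f i :=
    linearIndependent_of_top_le_span_of_card_eq_finrank
      (by rw [← spanFlag_eq_span_range, hf]) (by simp [hV])
  refine ⟨fun l _ => spanFlag_succ f l ▸ le_sup_left, fun l hl => ?_⟩
  have hli' := hli.comp (Fin.castLE hl) (Fin.castLE_injective hl)
  rw [spanFlag_eq_span_range]
  exact (finrank_span_eq_card hli').trans (Fintype.card_fin l)

lemma exists_transversePair_spanFlag [FiniteDimensional ℝ V] (hV : finrank ℝ V = n) :
    ∃ f g : ℕ → V, TransversePair n (spanFlag f) (spanFlag g) := by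
  let e : Basis (Fin n) ℝ V := finBasisOfFinrankEq ℝ V hV
  refine ⟨Function.extend Fin.val e 0, Function.extend Fin.val (e ∘ Fin.rev) 0, fun a ha => ?_⟩
  rw [eq_top_iff, ← e.span_eq, span_le]
  rintro _ ⟨i, rfl⟩
  by_cases hia : (i : ℕ) < a
  · refine mem_sup_left (subset_span ⟨i, hia, ?_⟩)
    exact Fin.val_injective.extend_apply _ _ _
  · refine mem_sup_right (subset_span ⟨i.rev, ?_, ?_⟩)
    · simp only [Fin.val_rev, Set.mem_Iio]
      omega
    · rw [Fin.val_injective.extend_apply, Function.comp_apply, Fin.rev_rev]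

end SpanFlag

section WedgeFamily

variable {V : Type*} {n : ℕ}

/-- The family `f 0, …, f (a - 1), g 0, …, g (b - 1), h 0, …, h (n - a - b - 1)` to which `wedge`
applies the alternating form. -/
def wedgeFamily (n : ℕ) (f g h : ℕ → V) (a b : ℕ) (l : Fin n) : V :=
  if (l : ℕ) < a then f l else if (l : ℕ) < a + b then g (l - a) else h (l - a - b)

lemma wedgeFamily_update (f g h : ℕ → V) {a b c : ℕ} (habc : a + b + c + 1 = n) (v : V) :
    wedgeFamily n f g (Function.update h c v) a b =
      Function.update (wedgeFamily n f g h a b) ⟨a + b + c, by omega⟩ v := by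
  funext l
  rcases eq_or_ne l ⟨a + b + c, by omega⟩ with rfl | hl
  · simp [wedgeFamily, add_assoc]
  · have hlc : (l : ℕ) ≠ a + b + c := fun hlc => hl (Fin.ext hlc)
    rw [Function.update_of_ne hl]
    unfold wedgeFamily
    split_ifs
    · rfl
    · rfl
    · exact Function.update_of_ne (by omega) _ _

end WedgeFamily

section Wedge

variable {V : Type*} [AddCommGroup V] [Module ℝ V] {n : ℕ}

lemma wedge_eq_apply_wedgeFamily (ω : V [⋀^Fin n]→ₗ[ℝ] ℝ) (f g h : ℕ → V) (a b c : ℕ) :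
    wedge n ω f g h a b c = ω (wedgeFamily n f g h a b) :=
  rfl

lemma span_range_wedgeFamily (f g h : ℕ → V) {a b c : ℕ} (habc : a + b + c = n) :
    span ℝ (Set.range (wedgeFamily n f g h a b)) = spanFlag f a ⊔ spanFlag g b ⊔ spanFlag h c := by
  simp only [spanFlag, ← span_union]
  congr 1
  apply Set.Subset.antisymm
  · rintro _ ⟨l, rfl⟩
    unfold wedgeFamily
    split_ifs with hla hlb
    · exact Or.inl (Or.inl ⟨l, hla, rfl⟩)
    · exact Or.inl (Or.inr ⟨l - a, by simp only [Set.mem_Iio]; omega, rfl⟩)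
    · exact Or.inr ⟨l - a - b, by simp only [Set.mem_Iio]; omega, rfl⟩
  · rintro _ ((⟨l, hl, rfl⟩ | ⟨l, hl, rfl⟩) | ⟨l, hl, rfl⟩) <;> rw [Set.mem_Iio] at hl
    · exact ⟨⟨l, by omega⟩, by simp [wedgeFamily, hl]⟩
    · exact ⟨⟨a + l, by omega⟩, by simp [wedgeFamily, hl]⟩
    · exact ⟨⟨a + b + l, by omega⟩, by simp [wedgeFamily, add_assoc]⟩

lemma wedge_ne_zero_iff [FiniteDimensional ℝ V] (hV : finrank ℝ V = n)
    {ω : V [⋀^Fin n]→ₗ[ℝ] ℝ} (hω : ω ≠ 0) (f g h : ℕ → V) {a b c : ℕ} (habc : a + b + c = n) :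
    wedge n ω f g h a b c ≠ 0 ↔ spanFlag f a ⊔ spanFlag g b ⊔ spanFlag h c = ⊤ := by
  rw [wedge_eq_apply_wedgeFamily, alternatingMap_apply_ne_zero_iff hω (by simp [hV]),
    span_range_wedgeFamily f g h habc]

end Wedge

section TripleRatioInvariance

variable {V : Type*} [AddCommGroup V] [Module ℝ V] {n : ℕ}

lemma exists_forall_map_eq_mul_of_block {f f' : ℕ → V}
    (hf : ∀ l, l ≤ n → spanFlag f' l = spanFlag f l) :
    ∃ A : ℕ → ℝ, ∀ (ω : V [⋀^Fin n]→ₗ[ℝ] ℝ) (s k : ℕ) (hsk : s + k ≤ n) (u u' : Fin n → V),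
      (∀ l : Fin k, u ⟨s + l, by omega⟩ = f l) → (∀ l : Fin k, u' ⟨s + l, by omega⟩ = f' l) →
      (∀ i : Fin n, (i : ℕ) < s ∨ s + k ≤ i → u' i = u i) → ω u' = A k * ω u := by
  have hblock : ∀ k ≤ n, ∃ δ : ℝ, ∀ (ω : V [⋀^Fin n]→ₗ[ℝ] ℝ) (σ : Fin k ↪ Fin n) (u : Fin n → V),
      ω (Function.extend σ (fun l => f' l) u) = δ * ω (Function.extend σ (fun l => f l) u) := by
    intro k hk
    refine exists_forall_alternatingMap_eq_mul fun l => ?_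
    rw [← spanFlag_eq_span_range, ← hf k hk]
    exact mem_spanFlag f' l.2
  choose! A hA using hblock
  refine ⟨A, fun ω s k hsk u u' hu hu' hoff => ?_⟩
  let σ : Fin k ↪ Fin n := (Fin.natAddEmb s).trans (Fin.castLEEmb hsk)
  have hext : ∀ (v : Fin k → V) (u₁ : Fin n → V), (∀ l, u₁ (σ l) = v l) →
      (∀ i : Fin n, (i : ℕ) < s ∨ s + k ≤ i → u₁ i = u i) → Function.extend σ v u = u₁ := by
    intro v u₁ hv hoff₁
    funext i
    by_cases hi : ∃ l, σ l = i
    · obtain ⟨l, rfl⟩ := hi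
      rw [σ.injective.extend_apply, hv]
    · rw [Function.extend_apply' _ _ _ hi, hoff₁]
      by_contra! hmem
      exact hi ⟨⟨i - s, by omega⟩, Fin.ext (Nat.add_sub_of_le hmem.1)⟩
  rw [← hext (fun l => f' l) u' hu' hoff, hA k (by omega), hext _ u hu fun _ _ => rfl]

lemma exists_forall_wedge_eq_mul {f g h f' g' h' : ℕ → V}
    (hf : ∀ l, l ≤ n → spanFlag f' l = spanFlag f l)
    (hg : ∀ l, l ≤ n → spanFlag g' l = spanFlag g l)
    (hh : ∀ l, l ≤ n → spanFlag h' l = spanFlag h l) :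
    ∃ A B C : ℕ → ℝ, ∀ (ω : V [⋀^Fin n]→ₗ[ℝ] ℝ) (a b c : ℕ), a + b + c = n →
      wedge n ω f' g' h' a b c = A a * B b * C c * wedge n ω f g h a b c := by
  obtain ⟨A, hA⟩ := exists_forall_map_eq_mul_of_block hf
  obtain ⟨B, hB⟩ := exists_forall_map_eq_mul_of_block hg
  obtain ⟨C, hC⟩ := exists_forall_map_eq_mul_of_block hh
  refine ⟨A, B, C, fun ω a b c habc => ?_⟩
  have replace_f : wedge n ω f' g' h' a b c = A a * wedge n ω f g' h' a b c := by
    refine hA ω 0 a (by omega) _ _ (fun l => ?_) (fun l => ?_) fun i hi => ?_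
    · simp
    · simp
    · simp [show ¬ (i : ℕ) < a by omega]
  have replace_g : wedge n ω f g' h' a b c = B b * wedge n ω f g h' a b c := by
    refine hB ω a b (by omega) _ _ (fun l => ?_) (fun l => ?_) fun i hi => ?_
    · simp
    · simp
    · rcases hi with hi | hi
      · simp [hi]
      · simp [show ¬ (i : ℕ) < a + b by omega]
  have replace_h : wedge n ω f g h' a b c = C c * wedge n ω f g h a b c := by
    refine hC ω (a + b) c (by omega) _ _ (fun l => ?_) (fun l => ?_) fun i hi => ?_
    · simp [add_assoc]
    · simp [add_assoc]
    · simp [show (i : ℕ) < a + b by omega]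
  rw [replace_f, replace_g, replace_h]
  ring

lemma tripleRatio_succ_eq_div (ω : V [⋀^Fin n]→ₗ[ℝ] ℝ) (f g h : ℕ → V) (i j k : ℕ) :
    tripleRatio n ω f g h (i + 1) (j + 1) (k + 1) =
      (wedge n ω f g h (i + 2) (j + 1) k * wedge n ω f g h i (j + 2) (k + 1) *
          wedge n ω f g h (i + 1) j (k + 2)) /
        (wedge n ω f g h (i + 2) j (k + 1) * wedge n ω f g h (i + 1) (j + 2) k *
          wedge n ω f g h i (j + 1) (k + 2)) := by
  simp only [tripleRatio, Nat.add_sub_cancel, div_mul_div_comm]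

lemma tripleRatio_eq_of_adapted [FiniteDimensional ℝ V] (hV : finrank ℝ V = n)
    {F G H : ℕ → Submodule ℝ V} (hT : TransverseTriple n F G H)
    {ω ω' : V [⋀^Fin n]→ₗ[ℝ] ℝ} (hω : ω ≠ 0) (hω' : ω' ≠ 0) {f g h f' g' h' : ℕ → V}
    (hf : Adapted n F f) (hg : Adapted n G g) (hh : Adapted n H h)
    (hf' : Adapted n F f') (hg' : Adapted n G g') (hh' : Adapted n H h')
    {i j k : ℕ} (hijk : i + 1 + (j + 1) + (k + 1) = n) :
    tripleRatio n ω' f' g' h' (i + 1) (j + 1) (k + 1) =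
      tripleRatio n ω f g h (i + 1) (j + 1) (k + 1) := by
  obtain ⟨r, hr⟩ := exists_eq_smul_alternatingMap hω (by simp [hV]) ω'
  obtain ⟨A, B, C, hABC⟩ := exists_forall_wedge_eq_mul (n := n)
    (fun l hl => (hf' l hl).symm.trans (hf l hl)) (fun l hl => (hg' l hl).symm.trans (hg l hl))
    (fun l hl => (hh' l hl).symm.trans (hh l hl))
  have hscale : ∀ a b c, a + b + c = n →
      wedge n ω' f' g' h' a b c = r * (A a * B b * C c * wedge n ω f g h a b c) :=
    fun a b c habc => by rw [← hABC ω a b c habc, hr]; rfl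
  have hne : ∀ a b c, a + b + c = n → r ≠ 0 ∧ A a ≠ 0 ∧ B b ≠ 0 ∧ C c ≠ 0 := by
    intro a b c habc
    have hw : wedge n ω' f' g' h' a b c ≠ 0 := by
      rw [wedge_ne_zero_iff hV hω' f' g' h' habc, spanFlag, spanFlag, spanFlag,
        ← hf' a (by omega), ← hg' b (by omega), ← hh' c (by omega)]
      exact hT a b c habc
    simp only [hscale a b c habc, ne_eq, mul_eq_zero, not_or] at hw
    tauto
  obtain ⟨hr0, hA₂, hB₁, hC₀⟩ := hne (i + 2) (j + 1) k (by omega)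
  obtain ⟨-, hA₀, hB₂, hC₁⟩ := hne i (j + 2) (k + 1) (by omega)
  obtain ⟨-, hA₁, hB₀, hC₂⟩ := hne (i + 1) j (k + 2) (by omega)
  rw [tripleRatio_succ_eq_div, tripleRatio_succ_eq_div]
  iterate 6 rw [hscale _ _ _ (by omega)]
  field_simp

end TripleRatioInvariance

section Realization

variable {V : Type*} [AddCommGroup V] [Module ℝ V] {n : ℕ}

lemma wedge_update_of_le (ω : V [⋀^Fin n]→ₗ[ℝ] ℝ) (f g h : ℕ → V) {a b c m : ℕ} (hcm : c ≤ m)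
    (habc : a + b + c = n) (v : V) :
    wedge n ω f g (Function.update h m v) a b c = wedge n ω f g h a b c := by
  refine congrArg ω (funext fun l => ?_)
  split_ifs
  · rfl
  · rfl
  · exact Function.update_of_ne (by omega) _ _

lemma wedge_update_eq_zero (ω : V [⋀^Fin n]→ₗ[ℝ] ℝ) (f g h : ℕ → V) {a b c l : ℕ}
    (habc : a + b + c + 1 = n) (hla : l < a) :
    wedge n ω f g (Function.update h c (f l)) a b (c + 1) = 0 := by
  refine ω.map_eq_zero_of_eq _ (i := ⟨l, by omega⟩) (j := ⟨a + b + c, by omega⟩) ?_ ?_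
  · simp [hla, add_assoc]
  · simp only [ne_eq, Fin.mk.injEq]
    omega

lemma wedge_update_ne_zero_iff [FiniteDimensional ℝ V] (hV : finrank ℝ V = n)
    {ω : V [⋀^Fin n]→ₗ[ℝ] ℝ} (hω : ω ≠ 0) (f g h : ℕ → V) {a b c : ℕ} (habc : a + b + c + 1 = n) :
    wedge n ω f g (Function.update h c (f a)) a b (c + 1) ≠ 0 ↔
      wedge n ω f g h (a + 1) b c ≠ 0 := by
  rw [wedge_ne_zero_iff hV hω _ _ _ (by omega), wedge_ne_zero_iff hV hω _ _ _ (by omega),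
    spanFlag_update_succ, spanFlag_succ]
  ac_nf

lemma exists_wedge_update_eq [FiniteDimensional ℝ V] (hV : finrank ℝ V = n)
    {ω : V [⋀^Fin n]→ₗ[ℝ] ℝ} (hω : ω ≠ 0) {f g h : ℕ → V} {c : ℕ}
    (hc : ∀ a b, a + b + c = n → wedge n ω f g h a b c ≠ 0) (y : ℕ → ℝ) :
    ∃ v, ∀ a b, a + b + (c + 1) = n →
      wedge n ω f g (Function.update h c v) a b (c + 1) = y a := by
  let φ : Fin (n - c) → Dual ℝ V := fun a =>
    have hn : n - 1 < n := by have := a.2; omega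
    ω.toMultilinearMap.toLinearMap (wedgeFamily n f g h a (n - c - 1 - a)) ⟨n - 1, hn⟩
  have hφ : ∀ (a : Fin (n - c)) v,
      φ a v = wedge n ω f g (Function.update h c v) a (n - c - 1 - a) (c + 1) := by
    intro a v
    have hlast : (a : ℕ) + (n - c - 1 - a) + c = n - 1 := by omega
    rw [wedge_eq_apply_wedgeFamily, wedgeFamily_update f g h (by omega)]
    simp [φ, hlast]
  have hlower : ∀ a l : Fin (n - c), l < a → φ a (f l) = 0 := fun a l hla => by
    rw [hφ, wedge_update_eq_zero ω f g h (by omega) hla]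
  have hdiag : ∀ a : Fin (n - c), φ a (f a) ≠ 0 := fun a => by
    rw [hφ, wedge_update_ne_zero_iff hV hω f g h (by omega)]
    exact hc (a + 1) (n - c - 1 - a) (by omega)
  obtain ⟨v, hv⟩ := exists_forall_dual_apply_eq_of_triangular hlower hdiag fun a => y a
  refine ⟨v, fun a b hab => ?_⟩
  obtain rfl : b = n - c - 1 - a := by omega
  exact (hφ ⟨a, by omega⟩ v).symm.trans (hv _)

lemma exists_forall_wedge_eq [FiniteDimensional ℝ V] (hV : finrank ℝ V = n)
    {ω : V [⋀^Fin n]→ₗ[ℝ] ℝ} (hω : ω ≠ 0) {f g : ℕ → V} {w : ℕ → ℕ → ℝ}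
    (hw : ∀ a c, w a c ≠ 0) (hfg : ∀ a b, a + b = n → wedge n ω f g 0 a b 0 = w a 0) :
    ∃ h, ∀ a b c, a + b + c = n → wedge n ω f g h a b c = w a c := by
  suffices hrows : ∀ m, ∃ h, ∀ a b c, c ≤ m → a + b + c = n → wedge n ω f g h a b c = w a c by
    obtain ⟨h, hh⟩ := hrows n
    exact ⟨h, fun a b c habc => hh a b c (by omega) habc⟩
  intro m
  induction m with
  | zero =>
    refine ⟨0, fun a b c hc habc => ?_⟩
    obtain rfl : c = 0 := by omega
    exact hfg a b habc
  | succ m ih =>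
    obtain ⟨h, hh⟩ := ih
    obtain ⟨v, hv⟩ := exists_wedge_update_eq hV hω
      (fun a b hab => hh a b m le_rfl hab ▸ hw a m) (fun a => w a (m + 1))
    refine ⟨Function.update h m v, fun a b c hc habc => ?_⟩
    rcases Nat.le_or_eq_of_le_succ hc with hcm | rfl
    · rw [wedge_update_of_le ω f g h hcm habc, hh a b c hcm habc]
    · exact hv a b habc

lemma exists_transverse_tripleRatio_eq [FiniteDimensional ℝ V] (hV : finrank ℝ V = n)
    {ω : V [⋀^Fin n]→ₗ[ℝ] ℝ} (hω : ω ≠ 0) {t : ℕ → ℕ → ℕ → ℝ}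
    (ht : ∀ i j k : ℕ, 1 ≤ i → 1 ≤ j → 1 ≤ k → i + j + k = n → t i j k ≠ 0) :
    ∃ f g h : ℕ → V, TransverseTriple n (spanFlag f) (spanFlag g) (spanFlag h) ∧
      ∀ i j k : ℕ, i + 1 + (j + 1) + (k + 1) = n →
        tripleRatio n ω f g h (i + 1) (j + 1) (k + 1) = t (i + 1) (j + 1) (k + 1) := by
  obtain ⟨f, g, hfg⟩ := exists_transversePair_spanFlag hV
  let toUnit : ℝ → ℝˣ := fun x => if hx : x ≠ 0 then Units.mk0 x hx else 1
  have val_toUnit : ∀ x, x ≠ 0 → (toUnit x : ℝ) = x := fun x hx => by simp [toUnit, hx]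
  obtain ⟨w, hw₀, hw⟩ := exists_hexagon_eq (fun i k => toUnit (t i (n - i - k) k))
    (fun a => toUnit (wedge n ω f g 0 a (n - a) 0))
  have hbottom : ∀ a b, a + b = n → wedge n ω f g 0 a b 0 = w a 0 := by
    intro a b hab
    obtain rfl : b = n - a := by omega
    rw [hw₀, val_toUnit]
    rw [wedge_ne_zero_iff hV hω f g 0 hab, spanFlag_zero, sup_bot_eq]
    exact hfg a (by omega)
  obtain ⟨h, hh⟩ := exists_forall_wedge_eq hV hω (w := fun a c => w a c)
    (fun a c => (w a c).ne_zero) hbottom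
  refine ⟨f, g, h, fun a b c habc => ?_, fun i j k hijk => ?_⟩
  · rw [← wedge_ne_zero_iff hV hω f g h habc, hh a b c habc]
    exact (w a c).ne_zero
  · have hhex := congrArg Units.val (hw i k)
    have hj : n - (i + 1) - (k + 1) = j + 1 := by omega
    simp only [Units.val_mul, hj] at hhex
    rw [val_toUnit _ (ht _ _ _ (by omega) (by omega) (by omega) hijk)] at hhex
    rw [tripleRatio_succ_eq_div]
    iterate 6 rw [hh _ _ _ (by omega)]
    rw [hhex, mul_div_cancel_right₀ _ (by simp)]

end Realization

theorem statement15_general {V : Type*} [AddCommGroup V] [Module ℝ V] [FiniteDimensional ℝ V]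
    {n : ℕ} (hV : finrank ℝ V = n) (t : ℕ → ℕ → ℕ → ℝ)
    (ht : ∀ i j k : ℕ, 1 ≤ i → 1 ≤ j → 1 ≤ k → i + j + k = n → t i j k ≠ 0) :
    ∃ F G H : ℕ → Submodule ℝ V,
      IsFlag n F ∧ IsFlag n G ∧ IsFlag n H ∧ TransverseTriple n F G H ∧
      ∀ (ω : AlternatingMap ℝ V ℝ (Fin n)) (f g h : ℕ → V),
        ω ≠ 0 → Adapted n F f → Adapted n G g → Adapted n H h →
        ∀ i j k : ℕ, 1 ≤ i → 1 ≤ j → 1 ≤ k → i + j + k = n →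
          tripleRatio n ω f g h i j k = t i j k := by
  have hω : (finBasisOfFinrankEq ℝ V hV).det ≠ 0 := Basis.det_ne_zero _
  obtain ⟨f, g, h, hT, hratio⟩ := exists_transverse_tripleRatio_eq hV hω ht
  have hFtop : spanFlag f n = ⊤ := by simpa [spanFlag_zero] using hT n 0 0 rfl
  have hGtop : spanFlag g n = ⊤ := by simpa [spanFlag_zero] using hT 0 n 0 (by simp)
  have hHtop : spanFlag h n = ⊤ := by simpa [spanFlag_zero] using hT 0 0 n (by simp)
  refine ⟨spanFlag f, spanFlag g, spanFlag h, isFlag_spanFlag hV hFtop, isFlag_spanFlag hV hGtop,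
    isFlag_spanFlag hV hHtop, hT, fun ω' f' g' h' hω' hf' hg' hh' i j k hi hj hk hijk => ?_⟩
  obtain ⟨i, rfl⟩ := Nat.exists_eq_add_of_le' hi
  obtain ⟨j, rfl⟩ := Nat.exists_eq_add_of_le' hj
  obtain ⟨k, rfl⟩ := Nat.exists_eq_add_of_le' hk
  rw [tripleRatio_eq_of_adapted hV hT hω hω' (adapted_spanFlag f) (adapted_spanFlag g)
    (adapted_spanFlag h) hf' hg' hh' hijk, hratio i j k hijk]

theorem statement15 (n : ℕ) (hn : 3 ≤ n) (t : ℕ → ℕ → ℕ → ℝ)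
    (ht : ∀ i j k : ℕ, 1 ≤ i → 1 ≤ j → 1 ≤ k → i + j + k = n → t i j k ≠ 0) :
    ∃ F G H : ℕ → Submodule ℝ (Fin n → ℝ),
      IsFlag n F ∧ IsFlag n G ∧ IsFlag n H ∧ TransverseTriple n F G H ∧
      ∀ (ω : AlternatingMap ℝ (Fin n → ℝ) ℝ (Fin n)) (f g h : ℕ → (Fin n → ℝ)),
        ω ≠ 0 → Adapted n F f → Adapted n G g → Adapted n H h →
        ∀ i j k : ℕ, 1 ≤ i → 1 ≤ j → 1 ≤ k → i + j + k = n →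
          tripleRatio n ω f g h i j k = t i j k :=
  statement15_general (by simp) t ht
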